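/- Let R be a ring, λ ∈ ℤ, and let p : R → R be an additive map satisfying the weight-λ Rota-Baxter identity: p(x)p(y) = p(p(x)y) + p(x p(y)) + λ·p(xy) for all x, y ∈ R (where λ·r denotes the ℤ-scalar action). Fix n ∈ ℕ and let P act entrywise on n×n matrices over R: (P(A))_{ij} = p(A_{ij}). Then P satisfies the same weight-λ Rota-Baxter identity with respect to the matrix product: P(A)·P(B) = P(P(A)·B) + P(A·P(B)) + λ·P(A·B) for all A, B ∈ M_n(R). -/

import Mathlib

/-- If `p : R → R` is an additive Rota-Baxter operator of weight `λ` on a ring `R`,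
then the entrywise operator `A ↦ A.map p` is a Rota-Baxter operator of weight `λ`
on the matrix ring `M_n(R)`. -/
theorem matrix_map_rotaBaxter {R : Type*} [Ring R] (lam : ℤ) (p : R →+ R)
    (hp : ∀ x y : R, p x * p y = p (p x * y) + p (x * p y) + lam • p (x * y))
    (n : ℕ) (A B : Matrix (Fin n) (Fin n) R) :
    (A.map p) * (B.map p) =
      ((A.map p * B).map p) + ((A * B.map p).map p) + lam • ((A * B).map p) := by
  ext i j
  simp only [Matrix.mul_apply, Matrix.map_apply, Matrix.add_apply, Matrix.smul_apply, map_sum,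
    Finset.smul_sum, ← Finset.sum_add_distrib]
  exact Finset.sum_congr rfl fun k _ => hp _ _
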